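/- arXiv:1312.7241 — 2 statements merged into one kernel-verified Lean document; each statement's English description precedes it below -/
import Mathlib

section
/- If (T, f) solves the Duffing boundary value problem for (m, β), then ∫_{-T}^{T} f(t)⁵ dt = √2 · (2m² + 3β²) · arcsin(k) + 3mβ, where k = √((1 + β/√(2m² + β²))/2). -/
/-!
The curve `(f² - β, √2 f')` stays on the circle of radius `R = √(2m² + β²)`, and it turns with
angular velocity `-√2 f`. It starts at angle `θ₀ = arccos (-β/R)` and ends at the conjugate point;
since `f² > 0` inside the interval, its angle cannot reach `-θ₀` before time `T`, so there is no
winding and `√2 ∫ f = 2 θ₀` (`duffing_integral_f`), where `θ₀ / 2 = arcsin k`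
(`arcsin_duffingModulus`).

The fifth moment reduces to the first one: by the energy identity
`f'² = m² + β f² - f⁴/2` (`duffing_energy`), the derivative of `-f² f'/2 - (3/2) β f'` is
`f⁵ - (m² + (3/2) β²) f`.
-/

open Real

/-- The Duffing boundary value problem for `(m, β)`: a time `T > 0` and a `C^∞` function
`f` with `f'' = -f³ + β·f` on `[-T, T]`, boundary values `f(±T) = 0`,
`f'(-T) = m`, `f'(T) = -m`, and `f > 0` on `(-T, T)`. -/
def IsDuffingSolution (m : ℕ) (β T : ℝ) (f : ℝ → ℝ) : Prop :=
  0 < T ∧ ContDiff ℝ (⊤ : ℕ∞) f ∧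
    (∀ t ∈ Set.Icc (-T) T, deriv (deriv f) t = -(f t) ^ 3 + β * f t) ∧
    f (-T) = 0 ∧ f T = 0 ∧ deriv f (-T) = (m : ℝ) ∧ deriv f T = -(m : ℝ) ∧
    (∀ t ∈ Set.Ioo (-T) T, 0 < f t)


/-- The elliptic modulus `k = √((1 + β/√(2m² + β²))/2)` associated to `(m, β)`. -/
noncomputable def duffingModulus (m : ℕ) (β : ℝ) : ℝ :=
  Real.sqrt ((1 + β / Real.sqrt (2 * (m : ℝ) ^ 2 + β ^ 2)) / 2)

/-- A differentiable function with zero derivative on `[-T, T]` keeps its value at `-T`. -/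
lemma eq_left_of_hasDerivAt_zero {T : ℝ} {A A' : ℝ → ℝ} (hA : ∀ t, HasDerivAt A (A' t) t)
    (h0 : ∀ t ∈ Set.Icc (-T) T, A' t = 0) : ∀ t ∈ Set.Icc (-T) T, A t = A (-T) := by
  apply constant_of_has_deriv_right_zero
  · exact fun t _ => (hA t).continuousAt.continuousWithinAt
  · intro t ht
    have := (hA t).hasDerivWithinAt (s := Set.Ici t)
    rwa [h0 t ⟨ht.1, ht.2.le⟩] at this

section

variable {m : ℕ} {β T : ℝ} {f : ℝ → ℝ}

lemma duffing_hasDerivAt (h : IsDuffingSolution m β T f) (t : ℝ) :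
    HasDerivAt f (deriv f t) t :=
  (h.2.1.differentiable (by simp) t).hasDerivAt

lemma duffing_hasDerivAt_deriv (h : IsDuffingSolution m β T f) (t : ℝ) :
    HasDerivAt (deriv f) (deriv (deriv f) t) t := by
  have h1 : ContDiff ℝ (⊤ : ℕ∞) (deriv f) := (contDiff_infty_iff_deriv.1 h.2.1).2
  exact (h1.differentiable (by simp) t).hasDerivAt

lemma duffing_hasDerivAt_integral (h : IsDuffingSolution m β T f) (t : ℝ) :
    HasDerivAt (fun t => ∫ s in (-T)..t, f s) (f t) t :=
  intervalIntegral.integral_hasDerivAt_right (h.2.1.continuous.intervalIntegrable _ _)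
    (h.2.1.continuous.stronglyMeasurableAtFilter _ _) h.2.1.continuous.continuousAt

/-- Conservation of energy. -/
lemma duffing_energy (h : IsDuffingSolution m β T f) :
    ∀ t ∈ Set.Icc (-T) T, deriv f t ^ 2 = (m : ℝ) ^ 2 + β * f t ^ 2 - f t ^ 4 / 2 := by
  obtain ⟨hT, -, hode, hl, hr, hdl, hdr, hpos⟩ := id h
  intro t ht
  have key := eq_left_of_hasDerivAt_zero (T := T)
    (A := fun t => deriv f t ^ 2 - β * f t ^ 2 + f t ^ 4 / 2)
    (fun t => (((duffing_hasDerivAt_deriv h t).pow 2).sub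
      (((duffing_hasDerivAt h t).pow 2).const_mul β)).add
      (((duffing_hasDerivAt h t).pow 4).div_const 2))
    (fun t ht => by rw [hode t ht]; push_cast; ring) t ht
  simp only [hl, hdl] at key
  linarith

/-- Polar form of `(f² - β, √2 f')`, first coordinate: the angle starts at `arccos (-β/R)` and has
derivative `-√2 f`. -/
lemma duffing_polar (hm : 0 < m) (h : IsDuffingSolution m β T f) :
    ∀ t ∈ Set.Icc (-T) T, f t ^ 2 - β = √(2 * (m : ℝ) ^ 2 + β ^ 2) *
      cos (arccos (-β / √(2 * (m : ℝ) ^ 2 + β ^ 2)) - √2 * ∫ s in (-T)..t, f s) := by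
  obtain ⟨hT, -, hode, hl, hr, hdl, hdr, hpos⟩ := id h
  have hm' : (0 : ℝ) < m := by exact_mod_cast hm
  have hR2 : √(2 * (m : ℝ) ^ 2 + β ^ 2) ^ 2 = 2 * (m : ℝ) ^ 2 + β ^ 2 := sq_sqrt (by positivity)
  have hR : 0 < √(2 * (m : ℝ) ^ 2 + β ^ 2) := sqrt_pos.2 (by positivity)
  set R := √(2 * (m : ℝ) ^ 2 + β ^ 2)
  set θ₀ := arccos (-β / R) with hθ₀
  have h2 : √2 ^ 2 = (2 : ℝ) := sq_sqrt (by norm_num)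
  have hbR : |β| ≤ R := abs_le_of_sq_le_sq (by nlinarith) hR.le
  have hc : R * cos θ₀ = -β := by
    rw [hθ₀, cos_arccos]
    · field_simp
    · rw [le_div_iff₀ hR]; linarith [le_abs_self β]
    · rw [div_le_iff₀ hR]; linarith [neg_abs_le β]
  have hs : R * sin θ₀ = √2 * m := by
    refine (sq_eq_sq₀ (mul_nonneg hR.le (sin_arccos _ ▸ sqrt_nonneg _)) (by positivity)).1 ?_
    have := sin_sq_add_cos_sq θ₀
    linear_combination R ^ 2 * this + hR2 - (R * cos θ₀ - β) * hc - m ^ 2 * h2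
  have hθ : ∀ t, HasDerivAt (fun t => θ₀ - √2 * ∫ s in (-T)..t, f s) (-(√2 * f t)) t := by
    intro t
    have := ((duffing_hasDerivAt_integral h t).const_mul √2).const_sub θ₀
    exact this
  have hu : ∀ t, HasDerivAt (fun t => f t ^ 2 - β) (2 * f t * deriv f t) t := by
    intro t
    have := ((duffing_hasDerivAt h t).pow 2).sub_const β
    simpa using this
  have hv : ∀ t, HasDerivAt (fun t => √2 * deriv f t) (√2 * deriv (deriv f) t) t :=
    fun t => (duffing_hasDerivAt_deriv h t).const_mul √2
  -- The two coordinates of the curve, rotated back by the angle, are conserved.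
  have hA := eq_left_of_hasDerivAt_zero (T := T)
    (fun t => ((hu t).mul (hθ t).cos).add ((hv t).mul (hθ t).sin))
    (fun t ht => by
      rw [hode t ht]
      linear_combination (-f t * deriv f t * cos (θ₀ - √2 * ∫ s in (-T)..t, f s)) * h2)
  have hB := eq_left_of_hasDerivAt_zero (T := T)
    (fun t => ((hu t).mul (hθ t).sin).sub ((hv t).mul (hθ t).cos))
    (fun t ht => by
      rw [hode t ht]
      linear_combination (-f t * deriv f t * sin (θ₀ - √2 * ∫ s in (-T)..t, f s)) * h2)
  intro t ht
  have hA := hA t ht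
  have hB := hB t ht
  simp only [Pi.add_apply, Pi.sub_apply, Pi.mul_apply, intervalIntegral.integral_same, hl, hdl]
    at hA hB
  set θ := θ₀ - √2 * ∫ s in (-T)..t, f s
  simp only [mul_zero, sub_zero] at hA hB
  have h1 := sin_sq_add_cos_sq θ
  have h10 := sin_sq_add_cos_sq θ₀
  linear_combination cos θ * hA + sin θ * hB - (f t ^ 2 - β) * h1 + R * cos θ * h10
    - (cos θ * cos θ₀ + sin θ * sin θ₀) * hc - (cos θ * sin θ₀ - sin θ * cos θ₀) * hs

lemma duffing_integral_f (hm : 0 < m) (h : IsDuffingSolution m β T f) :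
    √2 * ∫ s in (-T)..T, f s = 2 * arccos (-β / √(2 * (m : ℝ) ^ 2 + β ^ 2)) := by
  have hpol := duffing_polar hm h
  obtain ⟨hT, -, hode, hl, hr, hdl, hdr, hpos⟩ := id h
  have hm' : (0 : ℝ) < m := by exact_mod_cast hm
  have hR : 0 < √(2 * (m : ℝ) ^ 2 + β ^ 2) := sqrt_pos.2 (by positivity)
  set R := √(2 * (m : ℝ) ^ 2 + β ^ 2)
  set θ₀ := arccos (-β / R) with hθ₀
  have h0 : 0 ≤ θ₀ := arccos_nonneg _
  have hpi : θ₀ ≤ π := arccos_le_pi _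
  have hL := hpol (-T) ⟨le_rfl, by linarith⟩
  have hE := hpol T ⟨by linarith, le_rfl⟩
  simp only [intervalIntegral.integral_same, mul_zero, sub_zero, hl] at hL
  rw [hr] at hE
  have hcos : cos (θ₀ - √2 * ∫ s in (-T)..T, f s) = cos θ₀ := by
    apply mul_left_cancel₀ hR.ne'
    rw [← hE, ← hL]
  have hIpos : 0 < √2 * ∫ s in (-T)..T, f s := by
    refine mul_pos (by positivity) ?_
    exact intervalIntegral.intervalIntegral_pos_of_pos_on
      (h.2.1.continuous.intervalIntegrable _ _) hpos (by linarith)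
  have hlow : -θ₀ ≤ θ₀ - √2 * ∫ s in (-T)..T, f s := by
    by_contra! hlt
    -- Otherwise the angle equals `-θ₀` at an interior time, where `f` would vanish.
    have hcont : ContinuousOn (fun t => √2 * ∫ s in (-T)..t, f s) (Set.Icc (-T) T) :=
      fun t _ => ((duffing_hasDerivAt_integral h t).const_mul √2).continuousAt.continuousWithinAt
    have hθpos : 0 < θ₀ := by
      rw [hθ₀, arccos_pos, div_lt_iff₀ hR]
      have : |β| < R := by
        rw [← sqrt_sq_eq_abs]
        exact sqrt_lt_sqrt (sq_nonneg _) (by nlinarith)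
      linarith [neg_abs_le β]
    obtain ⟨t, ht, hteq⟩ := intermediate_value_Ioo (by linarith : -T ≤ T) hcont
      (show 2 * θ₀ ∈ Set.Ioo _ _ by
        constructor
        · simpa using hθpos
        · linarith)
    have hp := hpol t ⟨ht.1.le, ht.2.le⟩
    simp only at hteq
    rw [hteq, show θ₀ - 2 * θ₀ = -θ₀ by ring, cos_neg] at hp
    have := hpos t ht
    nlinarith
  have habs : |θ₀ - √2 * ∫ s in (-T)..T, f s| = θ₀ := by
    apply injOn_cos ⟨abs_nonneg _, _⟩ ⟨h0, hpi⟩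
    · rw [cos_abs, hcos]
    · exact (abs_le.2 ⟨hlow, by linarith⟩).trans hpi
  rcases abs_eq h0 |>.1 habs with h1 | h1 <;> linarith

end

lemma arcsin_duffingModulus (m : ℕ) (hm : 0 < m) (β : ℝ) :
    2 * arcsin (duffingModulus m β) = arccos (-β / √(2 * (m : ℝ) ^ 2 + β ^ 2)) := by
  have hm' : (0 : ℝ) < m := by exact_mod_cast hm
  have hR : 0 < √(2 * (m : ℝ) ^ 2 + β ^ 2) := sqrt_pos.2 (by positivity)
  have hbR : |β| ≤ √(2 * (m : ℝ) ^ 2 + β ^ 2) := by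
    rw [← sqrt_sq_eq_abs]
    exact sqrt_le_sqrt (by nlinarith)
  unfold duffingModulus
  set R := √(2 * (m : ℝ) ^ 2 + β ^ 2)
  set θ₀ := arccos (-β / R) with hθ₀
  have h0 : 0 ≤ θ₀ := arccos_nonneg _
  have hpi : θ₀ ≤ π := arccos_le_pi _
  have hc : cos θ₀ = -β / R := by
    rw [hθ₀, cos_arccos]
    · rw [le_div_iff₀ hR]; linarith [le_abs_self β]
    · rw [div_le_iff₀ hR]; linarith [neg_abs_le β]
  have hk : √((1 + β / R) / 2) = sin (θ₀ / 2) := by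
    rw [sin_half_eq_sqrt h0 (by linarith [pi_pos]), hc]
    congr 1
    ring
  rw [hk, arcsin_sin (by linarith) (by linarith)]
  ring

/-- `∫_{-T}^{T} f⁵ = √2 · (2m² + 3β²) · arcsin k + 3mβ`. -/
theorem duffing_integral_f_fifth (m : ℕ) (hm : 0 < m) (β T : ℝ) (f : ℝ → ℝ)
    (h : IsDuffingSolution m β T f) :
    (∫ t in (-T)..T, (f t) ^ 5)
      = Real.sqrt 2 * (2 * (m : ℝ) ^ 2 + 3 * β ^ 2) * Real.arcsin (duffingModulus m β)
        + 3 * (m : ℝ) * β := by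
  have hI := duffing_integral_f hm h
  rw [← arcsin_duffingModulus m hm β] at hI
  have hen := duffing_energy h
  obtain ⟨hT, -, hode, hl, hr, hdl, hdr, hpos⟩ := id h
  have h2 : √2 ^ 2 = (2 : ℝ) := sq_sqrt (by norm_num)
  have hFTC := intervalIntegral.integral_eq_sub_of_hasDerivAt (a := -T) (b := T)
    (f := fun t => -(f t ^ 2 * deriv f t) / 2 - 3 / 2 * β * deriv f t
      + ((m : ℝ) ^ 2 + 3 / 2 * β ^ 2) * ∫ s in (-T)..t, f s)
    (f' := fun t => f t ^ 5)
    (fun t ht => by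
      rw [Set.uIcc_of_le (by linarith)] at ht
      have hd := (((((duffing_hasDerivAt h t).pow 2).mul (duffing_hasDerivAt_deriv h t)).neg.div_const
        2).sub ((duffing_hasDerivAt_deriv h t).const_mul (3 / 2 * β))).add
        ((duffing_hasDerivAt_integral h t).const_mul ((m : ℝ) ^ 2 + 3 / 2 * β ^ 2))
      refine hd.congr_deriv ?_
      rw [hode t ht]
      simp only [Pi.pow_apply]
      push_cast
      linear_combination (-f t) * hen t ht)
    ((h.2.1.continuous.pow 5).intervalIntegrable _ _)
  rw [hFTC]
  simp only [hl, hr, hdl, hdr, intervalIntegral.integral_same]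
  linear_combination (√2 / 2) * ((m : ℝ) ^ 2 + 3 / 2 * β ^ 2) * hI
    - ((m : ℝ) ^ 2 + 3 / 2 * β ^ 2) / 2 * (∫ s in (-T)..T, f s) * h2
end

section
/- Let R ∈ ℝ, let m be a positive integer, set β = -(R-8)/2, and let (T, f) solve the Duffing boundary value problem for (m, β). Then the volume of the associated constant scalar curvature metric, Vol = (2π²/m)·∫_{-T}^{T} f(t) dt, equals 4√2·π²·arcsin(k)/m, and consequently the value of the Yamabe functional R·√(Vol) equals 2·2^{1/4}·π·R·√(arcsin(k)/m), where k = √((1 + β/√(2m² + β²))/2). -/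
/-!
Set `D = √(2m² + β²)` and `φ(t) = √2 ∫_{-T}^t f`. The Duffing equation says precisely that the
vector `(u, v) = (f² - β, √2 f')` satisfies `u' = φ' v`, `v' = -φ' u`, so it rotates through the
angle `φ` (`duffing_sq_eq`). With `a = arcsin k` one has `cos 2a = -β/D` and `sin 2a = √2 m/D`
(`duffing_angle`), and the first coordinate of the rotated initial vector `(-β, √2 m)` becomes
`f² = 2 D sin(φ/2) sin(2a - φ/2)`.

Since `f > 0` inside the interval, the increasing function `φ` cannot reach `4a` before time `T`;
since `f(T) = 0` and `0 < φ(T)/2 ≤ 2a < π`, it reaches `4a` exactly at `T`. Hence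
`∫ f = 4a/√2 = 2√2 a`, from which both formulas follow.
-/

open Real

/-- The half-rotation angle `2 arcsin k` lies in `(0, π)` and is the argument of `-β + √2 m i`. -/
lemma duffing_angle (m : ℕ) (hm : 0 < m) (β : ℝ) :
    0 < arcsin (duffingModulus m β) ∧ arcsin (duffingModulus m β) < π / 2 ∧
    √(2 * (m : ℝ) ^ 2 + β ^ 2) * cos (2 * arcsin (duffingModulus m β)) = -β ∧
    √(2 * (m : ℝ) ^ 2 + β ^ 2) * sin (2 * arcsin (duffingModulus m β)) = √2 * m := by
  have hm' : (0 : ℝ) < m := by exact_mod_cast hm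
  have hpos : 0 < 2 * (m : ℝ) ^ 2 + β ^ 2 := by positivity
  unfold duffingModulus
  set D := √(2 * (m : ℝ) ^ 2 + β ^ 2) with hD
  have hD0 : 0 < D := Real.sqrt_pos.mpr hpos
  have hD2 : D ^ 2 = 2 * (m : ℝ) ^ 2 + β ^ 2 := Real.sq_sqrt hpos.le
  have hlt : |β| < D := abs_lt_of_sq_lt_sq (by nlinarith [sq_pos_of_pos hm']) hD0.le
  obtain ⟨h1, h2⟩ := abs_lt.mp hlt
  have h3 : -1 < β / D := by rw [lt_div_iff₀ hD0]; linarith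
  have h4 : β / D < 1 := by rw [div_lt_one hD0]; exact h2
  set k := √((1 + β / D) / 2) with hk
  have hk2 : k ^ 2 = (1 + β / D) / 2 := Real.sq_sqrt (by linarith)
  have hk0 : 0 < k := Real.sqrt_pos.mpr (by linarith)
  have hk1 : k < 1 := by nlinarith
  have ha0 : 0 < arcsin k := Real.arcsin_pos.mpr hk0
  have ha1 : arcsin k < π / 2 := Real.arcsin_lt_pi_div_two.mpr hk1
  have hs : sin (arcsin k) = k := Real.sin_arcsin (by linarith) hk1.le
  have hc : D * cos (2 * arcsin k) = -β := by
    rw [Real.cos_two_mul, Real.cos_sq', hs, hk2]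
    field_simp
    ring
  refine ⟨ha0, ha1, hc, ?_⟩
  have hsin : 0 < sin (2 * arcsin k) := Real.sin_pos_of_pos_of_lt_pi (by linarith) (by linarith)
  -- both sides are positive and their squares agree by `sin² + cos² = 1`
  have hsq : (D * sin (2 * arcsin k)) ^ 2 = (√2 * m) ^ 2 := by
    have e1 : (D * sin (2 * arcsin k)) ^ 2 = D ^ 2 - (D * cos (2 * arcsin k)) ^ 2 := by
      rw [mul_pow, mul_pow, Real.sin_sq]; ring
    rw [e1, hc, hD2, mul_pow, Real.sq_sqrt (by norm_num)]; ring
  exact (sq_eq_sq₀ (by positivity) (by positivity)).mp hsq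

/-- First coordinate of the rotation law for `(f² - β, √2 f')`. -/
lemma duffing_sq_eq {m : ℕ} {β T : ℝ} {f : ℝ → ℝ} (h : IsDuffingSolution m β T f)
    {t : ℝ} (ht : t ∈ Set.Icc (-T) T) :
    f t ^ 2 - β = -β * cos (√2 * ∫ s in (-T)..t, f s)
      + √2 * m * sin (√2 * ∫ s in (-T)..t, f s) := by
  obtain ⟨hT, hf, hode, h0, -, hd0, -, -⟩ := h
  set φ : ℝ → ℝ := fun t => √2 * ∫ s in (-T)..t, f s with hφ
  have hφ0 : φ (-T) = 0 := by simp [hφ]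
  have hφ' (x : ℝ) : HasDerivAt φ (√2 * f x) x :=
    (intervalIntegral.integral_hasDerivAt_right (hf.continuous.intervalIntegrable _ _)
      (hf.continuous.stronglyMeasurableAtFilter _ _) hf.continuous.continuousAt).const_mul _
  have hf1 : Differentiable ℝ f := hf.differentiable (by simp)
  have hf2 : Differentiable ℝ (deriv f) := by
    have : ContDiff ℝ 1 (deriv f) :=
      (contDiff_succ_iff_deriv.mp (contDiff_infty.mp hf 2 : ContDiff ℝ (1 + 1) f)).2.2
    exact this.differentiable (by simp)
  have hs2 : √2 * √2 = (2 : ℝ) := Real.mul_self_sqrt (by norm_num)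
  have hu (x : ℝ) : HasDerivAt (fun t => f t ^ 2 - β) (2 * f x * deriv f x) x := by
    have := ((hf1 x).hasDerivAt.pow 2).sub_const β
    simpa using this
  have hv (x : ℝ) (hx : x ∈ Set.Icc (-T) T) :
      HasDerivAt (fun t => √2 * deriv f t) (√2 * (-(f x) ^ 3 + β * f x)) x := by
    rw [← hode x hx]
    exact (hf2 x).hasDerivAt.const_mul _
  -- the vector rotated back through `φ` is constant
  have hG (x : ℝ) (hx : x ∈ Set.Icc (-T) T) : HasDerivAt
      (fun t => (f t ^ 2 - β) * cos (φ t) - √2 * deriv f t * sin (φ t)) 0 x := by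
    refine (((hu x).mul (hφ' x).cos).sub ((hv x hx).mul (hφ' x).sin)).congr_deriv ?_
    linear_combination -f x * deriv f x * cos (φ x) * hs2
  have hH (x : ℝ) (hx : x ∈ Set.Icc (-T) T) : HasDerivAt
      (fun t => (f t ^ 2 - β) * sin (φ t) + √2 * deriv f t * cos (φ t)) 0 x := by
    refine (((hu x).mul (hφ' x).sin).add ((hv x hx).mul (hφ' x).cos)).congr_deriv ?_
    linear_combination -f x * deriv f x * sin (φ x) * hs2
  have eG := constant_of_has_deriv_right_zero
    (fun x hx => (hG x hx).continuousAt.continuousWithinAt)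
    (fun x hx => (hG x ⟨hx.1, hx.2.le⟩).hasDerivWithinAt) t ht
  have eH := constant_of_has_deriv_right_zero
    (fun x hx => (hH x hx).continuousAt.continuousWithinAt)
    (fun x hx => (hH x ⟨hx.1, hx.2.le⟩).hasDerivWithinAt) t ht
  simp only [hφ0, h0, hd0, cos_zero, sin_zero] at eG eH
  change f t ^ 2 - β = -β * cos (φ t) + √2 * m * sin (φ t)
  linear_combination cos (φ t) * eG + sin (φ t) * eH
    - (f t ^ 2 - β) * Real.sin_sq_add_cos_sq (φ t)

lemma duffing_integral {m : ℕ} (hm : 0 < m) {β T : ℝ} {f : ℝ → ℝ}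
    (h : IsDuffingSolution m β T f) :
    ∫ t in (-T)..T, f t = 2 * √2 * arcsin (duffingModulus m β) := by
  obtain ⟨ha0, ha1, hc, hs⟩ := duffing_angle m hm β
  have hrot := fun t ht => duffing_sq_eq h (t := t) ht
  obtain ⟨hT, hf, -, -, hfT, -, -, hfpos⟩ := h
  set a := arcsin (duffingModulus m β)
  set D := √(2 * (m : ℝ) ^ 2 + β ^ 2)
  have hD0 : D ≠ 0 := by
    have hm' : (0 : ℝ) < m := by exact_mod_cast hm
    exact (Real.sqrt_pos.mpr (by positivity)).ne'
  set φ : ℝ → ℝ := fun t => √2 * ∫ s in (-T)..t, f s with hφ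
  have hφc : Continuous φ := continuous_const.mul
    (intervalIntegral.continuous_primitive (fun _ _ => hf.continuous.intervalIntegrable _ _) _)
  have hφ0 : φ (-T) = 0 := by simp [hφ]
  have hφT : 0 < φ T := mul_pos (by positivity)
    (intervalIntegral.intervalIntegral_pos_of_pos_on
      (hf.continuous.intervalIntegrable _ _) hfpos (by linarith))
  have hprod (t : ℝ) (ht : t ∈ Set.Icc (-T) T) :
      f t ^ 2 = 2 * D * (sin (φ t / 2) * sin (2 * a - φ t / 2)) := by
    have e : f t ^ 2 - β = -β * cos (φ t) + √2 * m * sin (φ t) := hrot t ht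
    have e2 : φ t = 2 * (φ t / 2) := by ring
    rw [e2, Real.cos_two_mul, Real.sin_two_mul, ← hc, ← hs] at e
    rw [Real.sin_sub]
    linear_combination e + 2 * D * cos (2 * a) * Real.sin_sq_add_cos_sq (φ t / 2) + hc
  have hle : φ T ≤ 4 * a := by
    by_contra! hlt
    obtain ⟨t, ht, hta⟩ := intermediate_value_Ioo (by linarith : -T ≤ T) hφc.continuousOn
      (show 4 * a ∈ Set.Ioo (φ (-T)) (φ T) from ⟨by rw [hφ0]; linarith, hlt⟩)
    have e := hprod t ⟨ht.1.le, ht.2.le⟩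
    have : 2 * a - φ t / 2 = 0 := by rw [hta]; ring
    rw [this, Real.sin_zero, mul_zero, mul_zero] at e
    exact (pow_pos (hfpos t ht) 2).ne' e
  have hTe : φ T = 4 * a := by
    have e := hprod T ⟨by linarith, le_rfl⟩
    have h1 : 0 < sin (φ T / 2) := Real.sin_pos_of_pos_of_lt_pi (by linarith) (by linarith)
    have h2 : sin (2 * a - φ T / 2) = 0 := by
      rw [hfT] at e
      have := h1.ne'
      simpa [hD0, this] using e.symm
    have h3 := (Real.sin_eq_zero_iff_of_lt_of_lt (by linarith) (by linarith)).mp h2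
    linarith
  have hs2 : √2 * √2 = (2 : ℝ) := Real.mul_self_sqrt (by norm_num)
  have hTe' : √2 * ∫ s in (-T)..T, f s = 4 * a := hTe
  linear_combination (√2 / 2) * hTe' - (∫ s in (-T)..T, f s) / 2 * hs2

/-- Volume and Yamabe functional value of the constant scalar curvature metric `g_m(R)`. -/
theorem volume_and_yamabe_value (m : ℕ) (hm : 0 < m) (R T : ℝ) (f : ℝ → ℝ)
    (h : IsDuffingSolution m (-(R - 8) / 2) T f) :
    (2 * π ^ 2 / (m : ℝ)) * ∫ t in (-T)..T, f t
      = 4 * Real.sqrt 2 * π ^ 2 * Real.arcsin (duffingModulus m (-(R - 8) / 2)) / (m : ℝ) ∧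
    R * Real.sqrt ((2 * π ^ 2 / (m : ℝ)) * ∫ t in (-T)..T, f t)
      = 2 * (2 : ℝ) ^ ((1 : ℝ) / 4) * π * R *
          Real.sqrt (Real.arcsin (duffingModulus m (-(R - 8) / 2)) / (m : ℝ)) := by
  rw [duffing_integral hm h]
  refine ⟨by ring, ?_⟩
  set a := arcsin (duffingModulus m (-(R - 8) / 2))
  have hq : ((2 : ℝ) ^ ((1 : ℝ) / 4)) ^ 2 = √2 := by
    rw [← Real.rpow_natCast, ← Real.rpow_mul (by norm_num), Real.sqrt_eq_rpow]
    norm_num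
  have e : 2 * π ^ 2 / (m : ℝ) * (2 * √2 * a)
      = (2 * (2 : ℝ) ^ ((1 : ℝ) / 4) * π) ^ 2 * (a / m) := by
    rw [mul_pow, mul_pow, hq]; ring
  rw [e, Real.sqrt_mul (by positivity), Real.sqrt_sq (by positivity)]
  ring
end
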